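/- There exists an absolute constant C > 0 such that for all positive integers M, N, every integer matrix A ∈ ℤ^{M×N} and every b ∈ ℤ^M, with Δ := max_{i,j} |A i j| (assumed ≥ 1), the set of extreme points of the convex hull (in ℝ^N) of { x : Fin N → ℝ | x ≥ 0, A x = b, and every coordinate of x is an integer } is finite and has cardinality at most N^M · ( C · M · (Real.log (M·Δ) + 1) )^N. -/

import Mathlib

lemma ihv_det_bound {τ : Type*} [Fintype τ] [DecidableEq τ] (M Δ : ℕ) (hM : 1 ≤ M) (hΔ : 1 ≤ Δ)
    (hc : Fintype.card τ ≤ M) (G : Matrix τ τ ℤ) (hG : ∀ i j, |G i j| ≤ (M * Δ ^ 2 : ℤ)) :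
    |G.det| ≤ (M * Δ : ℤ) ^ (2 * M) := by
  have h := Matrix.det_le (A := G) (abv := AbsoluteValue.abs) (x := (M * Δ ^ 2 : ℤ)) (by simpa using hG)
  rw [AbsoluteValue.abs_apply, nsmul_eq_mul] at h
  refine h.trans ?_
  have h1 : (Fintype.card τ).factorial ≤ M ^ M :=
    (Nat.factorial_le hc).trans (Nat.factorial_le_pow M)
  have h2 : (M * Δ ^ 2) ^ Fintype.card τ ≤ (M * Δ ^ 2) ^ M :=
    Nat.pow_le_pow_right (by positivity) hc
  have h3 := Nat.mul_le_mul h1 h2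
  calc _ = (((Fintype.card τ).factorial * (M * Δ ^ 2) ^ Fintype.card τ : ℕ) : ℤ) := by push_cast; rfl
    _ ≤ ((M ^ M * (M * Δ ^ 2) ^ M : ℕ) : ℤ) := by exact_mod_cast h3
    _ = _ := by push_cast; rw [← mul_pow, pow_mul]; ring

lemma ihv_left_inv {τ : Type*} [Fintype τ] [DecidableEq τ] (M Δ : ℕ) (hM : 1 ≤ M) (hΔ : 1 ≤ Δ)
    (E : Matrix (Fin M) τ ℤ) (hE : ∀ i j, |E i j| ≤ (Δ : ℤ))
    (hinj : ∀ v, E.mulVec v = 0 → v = 0) :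
    ∃ (D : ℤ) (H : Matrix τ (Fin M) ℤ), D ≠ 0 ∧ |D| ≤ (M * Δ : ℤ) ^ (2 * M + 1) ∧
      (∀ j i, |H j i| ≤ (M * Δ : ℤ) ^ (2 * M + 1)) ∧ H * E = D • (1 : Matrix τ τ ℤ) := by
  have hc : Fintype.card τ ≤ M := by
    have : Function.Injective E.mulVecLin := by
      rw [← LinearMap.ker_eq_bot, LinearMap.ker_eq_bot']
      simpa using hinj
    simpa using card_le_of_injective ℤ E.mulVecLin this
  have hMΔ : (1 : ℤ) ≤ M * Δ := by
    have : 1 ≤ M * Δ := Nat.mul_pos hM hΔ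
    exact_mod_cast this
  have hX : (1 : ℤ) ≤ M * Δ ^ 2 := by
    have : 1 ≤ M * Δ ^ 2 := Nat.mul_pos hM (by positivity)
    exact_mod_cast this
  set G : Matrix τ τ ℤ := E.transpose * E with hGdef
  have hG : ∀ i j, |G i j| ≤ (M * Δ ^ 2 : ℤ) := by
    intro i j
    rw [hGdef, Matrix.mul_apply]
    refine (Finset.abs_sum_le_sum_abs _ _).trans ?_
    calc _ ≤ ∑ _k : Fin M, (Δ ^ 2 : ℤ) := by
            refine Finset.sum_le_sum fun k _ => ?_
            rw [Matrix.transpose_apply, abs_mul, sq]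
            exact mul_le_mul (hE _ _) (hE _ _) (abs_nonneg _) (by positivity)
      _ = _ := by simp
  have hadj : ∀ i j, |G.adjugate i j| ≤ (M * Δ : ℤ) ^ (2 * M) := by
    intro i j
    rw [Matrix.adjugate_apply]
    apply ihv_det_bound M Δ hM hΔ hc
    intro a c
    rw [Matrix.updateRow_apply]
    split_ifs
    · rw [Pi.single_apply]
      split_ifs
      · simpa using hX
      · simp; positivity
    · exact hG _ _
  refine ⟨G.det, G.adjugate * E.transpose, ?_, ?_, ?_, ?_⟩
  · intro h0
    obtain ⟨v, hv, hv0⟩ := Matrix.exists_mulVec_eq_zero_iff.mpr h0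
    apply hv
    apply hinj
    have : dotProduct (E.mulVec v) (E.mulVec v) = 0 := by
      rw [Matrix.dotProduct_mulVec, Matrix.vecMul_mulVec, ← Matrix.dotProduct_mulVec]
      rw [hGdef] at hv0
      simp [hv0]
    exact dotProduct_self_eq_zero.mp this
  · refine (ihv_det_bound M Δ hM hΔ hc G hG).trans ?_
    exact pow_le_pow_right₀ hMΔ (by omega)
  · intro j i
    rw [Matrix.mul_apply]
    refine (Finset.abs_sum_le_sum_abs _ _).trans ?_
    calc _ ≤ ∑ _k : τ, ((M * Δ : ℤ) ^ (2 * M) * Δ) := by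
            refine Finset.sum_le_sum fun k _ => ?_
            rw [Matrix.transpose_apply, abs_mul]
            exact mul_le_mul (hadj _ _) (hE _ _) (abs_nonneg _) (by positivity)
      _ = (Fintype.card τ : ℤ) * ((M * Δ : ℤ) ^ (2 * M) * Δ) := by simp
      _ ≤ (M : ℤ) * ((M * Δ : ℤ) ^ (2 * M) * Δ) := by
            gcongr
      _ = _ := by ring
  · rw [Matrix.mul_assoc, ← hGdef, Matrix.adjugate_mul]

/-- columns in `T` are independent -/
def IhvInd {M N : ℕ} (A : Matrix (Fin M) (Fin N) ℤ) (T : Finset (Fin N)) : Prop :=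
  ∀ g : Fin N → ℤ, A.mulVec g = 0 → (∀ j, j ∉ T → g j = 0) → g = 0

lemma ihv_left_inv' {M N : ℕ} (Δ : ℕ) (hM : 1 ≤ M) (hΔ : 1 ≤ Δ)
    (A : Matrix (Fin M) (Fin N) ℤ) (hA : ∀ i j, |A i j| ≤ (Δ : ℤ)) (T : Finset (Fin N))
    (hT : IhvInd A T) :
    ∃ (D : ℤ) (H : Fin N → Fin M → ℤ), D ≠ 0 ∧ |D| ≤ (M * Δ : ℤ) ^ (2 * M + 1) ∧
      (∀ j i, |H j i| ≤ (M * Δ : ℤ) ^ (2 * M + 1)) ∧ (∀ j, j ∉ T → ∀ i, H j i = 0) ∧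
      ∀ g : Fin N → ℤ, (∀ j, j ∉ T → g j = 0) → ∀ j,
        ∑ i, H j i * A.mulVec g i = D * g j := by
  classical
  have key : ∀ g : Fin N → ℤ, (∀ j, j ∉ T → g j = 0) →
      A.mulVec g = (A.submatrix id (Subtype.val : T → Fin N)).mulVec (fun j => g j) := by
    intro g hg
    ext i
    simp only [Matrix.mulVec, dotProduct, Matrix.submatrix_apply, id]
    rw [Finset.sum_coe_sort T (fun j => A i j * g j)]
    symm
    apply Finset.sum_subset (Finset.subset_univ _)
    intro j _ hj
    simp [hg j hj]
  obtain ⟨D, H, hD, hDb, hHb, hH⟩ := ihv_left_inv M Δ hM hΔ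
    (A.submatrix id (Subtype.val : T → Fin N)) (fun i j => hA _ _) (by
      intro v hv
      have h := hT (fun j => if h : j ∈ T then v ⟨j, h⟩ else 0) (by
        rw [key _ (by intro j hj; simp [hj])]
        simpa using hv) (by intro j hj; simp [hj])
      ext j
      have := congrFun h j
      simpa using this)
  refine ⟨D, fun j i => if h : j ∈ T then H ⟨j, h⟩ i else 0, hD, hDb, ?_, ?_, ?_⟩
  · intro j i
    by_cases h : j ∈ T
    · simpa [h] using hHb _ _
    · simp [h]; positivity
  · intro j hj i
    simp [hj]
  · intro g hg j
    by_cases h : j ∈ T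
    · simp only [h, dif_pos]
      rw [key g hg]
      have := congrFun (congrArg (fun Q => Matrix.mulVec Q (fun j : T => g j)) hH) ⟨j, h⟩
      simp only [← Matrix.mulVec_mulVec, Matrix.smul_mulVec, Matrix.one_mulVec] at this
      simpa [Matrix.mulVec, dotProduct] using this
    · simp [h, hg j h]

lemma ihv_small_kernel {M N : ℕ} (Δ : ℕ) (hM : 1 ≤ M) (hΔ : 1 ≤ Δ)
    (A : Matrix (Fin M) (Fin N) ℤ) (hA : ∀ i j, |A i j| ≤ (Δ : ℤ)) (T : Finset (Fin N))
    (hT : ¬ IhvInd A T) :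
    ∃ g : Fin N → ℤ, g ≠ 0 ∧ A.mulVec g = 0 ∧ (∀ j, j ∉ T → g j = 0) ∧
      ∀ j, |g j| ≤ (M * Δ : ℤ) ^ (2 * M + 2) := by
  classical
  induction T using Finset.induction_on with
  | empty =>
    exfalso; apply hT
    intro g _ h
    ext j; simpa using h j
  | insert a S ha ih =>
    by_cases hS : IhvInd A S
    · obtain ⟨D, H, hD, hDb, hHb, hH0, hH⟩ := ihv_left_inv' Δ hM hΔ A hA S hS
      have hMΔ : (1 : ℤ) ≤ M * Δ := by
        have : 1 ≤ M * Δ := Nat.mul_pos hM hΔ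
        exact_mod_cast this
      unfold IhvInd at hT
      push Not at hT
      obtain ⟨f, hf, hfs, hf0⟩ := hT
      have hfa : f a ≠ 0 := by
        intro h
        apply hf0
        apply hS f hf
        intro j hj
        by_cases hja : j = a
        · rw [hja, h]
        · exact hfs j (by simp [hja, hj])
      -- f = f a • e_a + u
      set e : Fin N → ℤ := Pi.single a 1 with he
      set u : Fin N → ℤ := f - f a • e with hu
      have hus : ∀ j, j ∉ S → u j = 0 := by
        intro j hj
        by_cases hja : j = a
        · subst hja; simp [hu, he]
        · simp [hu, he, hja, hfs j (by simp [hja, hj])]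
      have hAu : A.mulVec u = - (f a • A.mulVec e) := by
        rw [hu, Matrix.mulVec_sub, hf, Matrix.mulVec_smul]; simp
      set w : Fin N → ℤ := fun j => ∑ i, H j i * A.mulVec e i with hw
      have hDu : D • u = - (f a • w) := by
        ext j
        have := hH u hus j
        rw [hAu] at this
        simp only [Pi.smul_apply, smul_eq_mul, Pi.neg_apply, hw]
        rw [← this, Finset.mul_sum, ← Finset.sum_neg_distrib]
        refine Finset.sum_congr rfl fun i _ => ?_
        simp only [Pi.smul_apply, smul_eq_mul, Pi.neg_apply]
        ring
      have hws : ∀ j, j ∉ S → w j = 0 := by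
        intro j hj
        simp [hw, hH0 j hj]
      refine ⟨D • e - w, ?_, ?_, ?_, ?_⟩
      · intro h
        have := congrFun h a
        simp [he, hws a ha, hD] at this
      · have h1 : f a • A.mulVec (D • e - w) = 0 := by
          rw [← Matrix.mulVec_smul, smul_sub, sub_eq_add_neg, ← hDu, smul_comm, ← smul_add,
            Matrix.mulVec_smul, hu]
          simp [hf]
        exact (smul_eq_zero.mp h1).resolve_left hfa
      · intro j hj
        simp only [Finset.mem_insert, not_or] at hj
        simp [he, hj.1, hws j hj.2]
      · intro j
        by_cases hja : j = a
        · subst hja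
          simp only [Pi.sub_apply, Pi.smul_apply, hws j ha, he, Pi.single_eq_same]
          simp only [smul_eq_mul, mul_one, sub_zero]
          exact hDb.trans (pow_le_pow_right₀ hMΔ (by omega))
        · simp only [Pi.sub_apply, Pi.smul_apply, he, Pi.single_eq_of_ne hja]
          simp only [smul_zero, zero_sub, abs_neg, hw]
          refine (Finset.abs_sum_le_sum_abs _ _).trans ?_
          calc _ ≤ ∑ _k : Fin M, ((M * Δ : ℤ) ^ (2 * M + 1) * Δ) := by
                refine Finset.sum_le_sum fun k _ => ?_
                rw [abs_mul]
                refine mul_le_mul (hHb _ _) ?_ (abs_nonneg _) (by positivity)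
                simpa [he] using hA k a
            _ = (M * Δ : ℤ) ^ (2 * M + 2) := by simp; ring
    · obtain ⟨g, h1, h2, h3, h4⟩ := ih hS
      exact ⟨g, h1, h2, fun j hj => h3 j (fun h => hj (Finset.mem_insert_of_mem h)), h4⟩

/-- integral points that are not a proper midpoint -/
def IhvV {M N : ℕ} (A : Matrix (Fin M) (Fin N) ℤ) (x : Fin N → ℤ) : Prop :=
  (∀ j, 0 ≤ x j) ∧ ∀ g : Fin N → ℤ, A.mulVec g = 0 → (∀ j, |g j| ≤ x j) → g = 0

lemma ihv_supp {M N : ℕ} (Δ : ℕ)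
    (A : Matrix (Fin M) (Fin N) ℤ) (hA : ∀ i j, |A i j| ≤ (Δ : ℤ)) (x : Fin N → ℤ)
    (hx : IhvV A x) : (Finset.univ.filter (fun j => x j ≠ 0)).card ≤ (2 * Δ + 1) ^ M := by
  classical
  have h : (Finset.univ.filter (fun j => x j ≠ 0)).card ≤
      (Fintype.piFinset (fun _ : Fin M => Finset.Icc (-(Δ : ℤ)) Δ)).card := by
    apply Finset.card_le_card_of_injOn (fun j i => A i j)
    · intro j _
      simp only [Finset.mem_coe, Fintype.mem_piFinset, Finset.mem_Icc]
      exact fun i => abs_le.mp (hA i j)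
    · intro j hj j' hj' hjj
      by_contra hne
      simp only [Finset.coe_filter, Finset.mem_univ, true_and, Set.mem_ofPred_eq] at hj hj'
      have := hx.2 (Pi.single j 1 - Pi.single j' 1) (by
        rw [Matrix.mulVec_sub]
        ext i
        have := congrFun hjj i
        simp at this
        simp [this]) (by
        intro l
        have h0 := hx.1 l
        by_cases h1 : l = j
        · subst h1
          simp [hne]
          omega
        · by_cases h2 : l = j'
          · subst h2
            simp [h1]
            omega
          · simp [h1, h2, h0])
      have := congrFun this j
      simp [hne] at this
  refine h.trans ?_
  rw [Fintype.card_piFinset]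
  simp only [Int.card_Icc, Finset.prod_const, Finset.card_univ, Fintype.card_fin]
  apply le_of_eq
  congr 1
  omega

lemma ihv_main {M N : ℕ} (Δ k L : ℕ) (hM : 1 ≤ M) (hΔ : 1 ≤ Δ)
    (A : Matrix (Fin M) (Fin N) ℤ) (hA : ∀ i j, |A i j| ≤ (Δ : ℤ)) (x y : Fin N → ℤ)
    (hx : IhvV A x) (hy : IhvV A y) (hxy : A.mulVec x = A.mulVec y)
    (hk : (M * Δ : ℤ) ^ (2 * M + 2) ≤ 2 ^ k)
    (hL : (M * Δ : ℤ) ^ (2 * M + 2) * 2 ^ k * (2 * (2 * Δ + 1) ^ M) ≤ 2 ^ L)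
    (hkL : k ≤ L)
    (hc : ∀ j, Nat.size (x j).toNat = Nat.size (y j).toNat ∨ (2 ^ L ≤ x j ∧ 2 ^ L ≤ y j)) :
    x = y := by
  classical
  have hkL' : (2 : ℤ) ^ k ≤ 2 ^ L := pow_le_pow_right₀ (by norm_num) hkL
  set T := Finset.univ.filter (fun j => (2 : ℤ) ^ k ≤ x j) with hTdef
  have hsz : ∀ (z : ℤ), 0 ≤ z → ∀ m : ℕ, m < Nat.size z.toNat ↔ (2 : ℤ) ^ m ≤ z := by
    intro z hz m
    rw [Nat.lt_size]
    zify
    rw [Int.toNat_of_nonneg hz]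
  have hTy : ∀ j, j ∉ T → x j < 2 ^ k ∧ y j < 2 ^ k := by
    intro j hj
    have h1 : x j < 2 ^ k := by simpa [hTdef] using hj
    refine ⟨h1, ?_⟩
    rcases hc j with h | h
    · by_contra h2
      push Not at h2
      rw [← hsz _ (hy.1 j), ← h, hsz _ (hx.1 j)] at h2
      linarith
    · linarith [h.1]
  have hInd : IhvInd A T := by
    by_contra hn
    obtain ⟨g, hg0, hg, hgs, hgb⟩ := ihv_small_kernel Δ hM hΔ A hA T hn
    apply hg0
    apply hx.2 g hg
    intro j
    by_cases hj : j ∈ T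
    · have : (2 : ℤ) ^ k ≤ x j := by simpa [hTdef] using hj
      linarith [hgb j]
    · rw [hgs j hj]; simpa using hx.1 j
  obtain ⟨D, H, hD, hDb, hHb, hH0, hH⟩ := ihv_left_inv' Δ hM hΔ A hA T hInd
  set u : Fin N → ℤ := fun j => if j ∈ T then x j - y j else 0 with hu
  set r : Fin N → ℤ := fun j => if j ∈ T then 0 else x j - y j with hr
  have hur : u + r = x - y := by
    ext j
    by_cases hj : j ∈ T <;> simp [hu, hr, hj]
  have hAur : A.mulVec u = - A.mulVec r := by
    have : A.mulVec (u + r) = 0 := by rw [hur, Matrix.mulVec_sub, hxy, sub_self]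
    rw [Matrix.mulVec_add] at this
    exact eq_neg_of_add_eq_zero_left this
  set S := Finset.univ.filter (fun j => x j ≠ 0) ∪ Finset.univ.filter (fun j => y j ≠ 0) with hS
  have hScard : (S.card : ℤ) ≤ 2 * (2 * Δ + 1) ^ M := by
    have h1 := ihv_supp Δ A hA x hx
    have h2 := ihv_supp Δ A hA y hy
    have h3 : S.card ≤ 2 * (2 * Δ + 1) ^ M := by
      refine (Finset.card_union_le _ _).trans ?_
      omega
    exact_mod_cast h3
  have hrb : ∀ j, |r j| ≤ 2 ^ k := by
    intro j
    by_cases hj : j ∈ T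
    · simp [hr, hj]
    · simp only [hr, hj, if_false]
      have := hTy j hj
      have := hx.1 j
      have := hy.1 j
      rw [abs_le]; constructor <;> linarith
  have hAr : ∀ i, |A.mulVec r i| ≤ Δ * 2 ^ k * (2 * (2 * Δ + 1) ^ M) := by
    intro i
    have h1 : A.mulVec r i = ∑ j ∈ S, A i j * r j := by
      simp only [Matrix.mulVec, dotProduct]
      symm
      apply Finset.sum_subset (Finset.subset_univ _)
      intro j _ hj
      have : x j = 0 ∧ y j = 0 := by simpa [hS] using hj
      simp [hr, this.1, this.2]
    rw [h1]
    refine (Finset.abs_sum_le_sum_abs _ _).trans ?_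
    calc _ ≤ ∑ _j ∈ S, ((Δ : ℤ) * 2 ^ k) := by
          refine Finset.sum_le_sum fun j _ => ?_
          rw [abs_mul]
          exact mul_le_mul (hA _ _) (hrb _) (abs_nonneg _) (by positivity)
      _ = (Δ * 2 ^ k) * (S.card : ℤ) := by simp [mul_comm]
      _ ≤ _ := by gcongr
  have hub : ∀ j, |u j| ≤ 2 ^ L := by
    intro j
    have h1 := hH u (fun j hj => by simp [hu, hj]) j
    have h2 : |u j| ≤ |D * u j| := by
      rw [abs_mul]
      exact le_mul_of_one_le_left (abs_nonneg _) (Int.one_le_abs hD)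
    refine h2.trans (le_trans ?_ hL)
    rw [← h1, hAur]
    refine (Finset.abs_sum_le_sum_abs _ _).trans ?_
    calc _ ≤ ∑ _i : Fin M, ((M * Δ : ℤ) ^ (2 * M + 1) * (Δ * 2 ^ k * (2 * (2 * Δ + 1) ^ M))) := by
          refine Finset.sum_le_sum fun i _ => ?_
          rw [abs_mul, Pi.neg_apply, abs_neg]
          exact mul_le_mul (hHb _ _) (hAr _) (abs_nonneg _) (by positivity)
      _ = _ := by simp; ring
  have hfin := hx.2 (x - y) (by rw [Matrix.mulVec_sub, hxy, sub_self]) (by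
    intro j
    have hx0 := hx.1 j
    have hy0 := hy.1 j
    rw [Pi.sub_apply]
    rcases hc j with h | h
    · rcases hs : Nat.size (x j).toNat with _ | s
      · have h1 : (x j).toNat = 0 := Nat.size_eq_zero.mp hs
        have h2 : (y j).toNat = 0 := Nat.size_eq_zero.mp (h ▸ hs)
        have : x j = 0 := by omega
        have : y j = 0 := by omega
        simp [*]
      · have a1 : (2 : ℤ) ^ s ≤ x j := (hsz _ hx0 s).mp (by omega)
        have a2 : (2 : ℤ) ^ s ≤ y j := (hsz _ hy0 s).mp (by omega)
        have a3 : x j < 2 ^ (s + 1) := by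
          by_contra h3
          push Not at h3
          rw [← hsz _ hx0] at h3
          omega
        have a4 : y j < 2 ^ (s + 1) := by
          by_contra h3
          push Not at h3
          rw [← hsz _ hy0] at h3
          omega
        rw [pow_succ] at a3 a4
        rw [abs_le]; constructor <;> linarith
    · have hj : j ∈ T := by
        simp only [hTdef, Finset.mem_filter, Finset.mem_univ, true_and]
        linarith [h.1]
      have := hub j
      simp only [hu, hj, if_true] at this
      linarith [h.1])
  exact sub_eq_zero.mp hfin

lemma ihv_extreme {M N : ℕ} (A : Matrix (Fin M) (Fin N) ℤ) (b : Fin M → ℤ) (x : Fin N → ℝ)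
    (hx : x ∈ Set.extremePoints ℝ (convexHull ℝ
            {x : Fin N → ℝ | (∀ j, 0 ≤ x j) ∧
              (∀ k, (∑ j, (A k j : ℝ) * x j) = (b k : ℝ)) ∧
              ∀ j, ∃ z : ℤ, x j = (z : ℝ)})) :
    ∃ z : Fin N → ℤ, (∀ j, x j = z j) ∧ A.mulVec z = b ∧ IhvV A z := by
  obtain ⟨h0, hA, hz⟩ := extremePoints_convexHull_subset hx
  choose z hz using hz
  refine ⟨z, hz, ?_, ?_, ?_⟩
  · ext k
    have := hA k
    simp only [hz] at this
    simp only [Matrix.mulVec, dotProduct]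
    exact_mod_cast this
  · intro j
    have := h0 j
    rw [hz] at this
    exact_mod_cast this
  · intro g hg hgb
    have hg' : ∀ k, ∑ j, (A k j : ℝ) * (g j : ℝ) = 0 := by
      intro k
      have := congrFun hg k
      simp only [Matrix.mulVec, dotProduct, Pi.zero_apply] at this
      exact_mod_cast this
    have m1 : (fun j => x j + g j) ∈ convexHull ℝ
            {x : Fin N → ℝ | (∀ j, 0 ≤ x j) ∧
              (∀ k, (∑ j, (A k j : ℝ) * x j) = (b k : ℝ)) ∧
              ∀ j, ∃ z : ℤ, x j = (z : ℝ)} := by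
      apply subset_convexHull
      refine ⟨fun j => ?_, fun k => ?_, fun j => ⟨z j + g j, by simp [hz]⟩⟩
      · have := (abs_le.mp (hgb j)).1
        have : 0 ≤ z j + g j := by linarith
        simp only [hz]
        exact_mod_cast this
      · simp only [mul_add, Finset.sum_add_distrib, hg', hA, add_zero]
    have m2 : (fun j => x j - g j) ∈ convexHull ℝ
            {x : Fin N → ℝ | (∀ j, 0 ≤ x j) ∧
              (∀ k, (∑ j, (A k j : ℝ) * x j) = (b k : ℝ)) ∧
              ∀ j, ∃ z : ℤ, x j = (z : ℝ)} := by
      apply subset_convexHull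
      refine ⟨fun j => ?_, fun k => ?_, fun j => ⟨z j - g j, by simp [hz]⟩⟩
      · have := (abs_le.mp (hgb j)).2
        have : 0 ≤ z j - g j := by linarith
        simp only [hz]
        exact_mod_cast this
      · simp only [mul_sub, Finset.sum_sub_distrib, hg', hA, sub_zero]
    have := hx.2 m1 m2 ⟨1/2, 1/2, by norm_num, by norm_num, by norm_num, by
      ext j; simp; ring⟩
    ext j
    have := congrFun this j
    simpa using this

theorem integer_hull_vertex_bound :
    ∃ C : ℝ, 0 < C ∧
      ∀ (M N : ℕ), 0 < M → 0 < N →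
        ∀ (A : Matrix (Fin M) (Fin N) ℤ) (b : Fin M → ℤ) (Δ : ℕ),
          Δ = Finset.univ.sup (fun q : Fin M × Fin N => (A q.1 q.2).natAbs) →
          1 ≤ Δ →
          (Set.extremePoints ℝ (convexHull ℝ
            {x : Fin N → ℝ | (∀ j, 0 ≤ x j) ∧
              (∀ k, (∑ j, (A k j : ℝ) * x j) = (b k : ℝ)) ∧
              ∀ j, ∃ z : ℤ, x j = (z : ℝ)})).Finite ∧
          ((Set.extremePoints ℝ (convexHull ℝ
            {x : Fin N → ℝ | (∀ j, 0 ≤ x j) ∧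
              (∀ k, (∑ j, (A k j : ℝ) * x j) = (b k : ℝ)) ∧
              ∀ j, ∃ z : ℤ, x j = (z : ℝ)})).ncard : ℝ) ≤
            (N : ℝ) ^ M * (C * (M : ℝ) * (Real.log ((M : ℝ) * (Δ : ℝ)) + 1)) ^ N := by
  refine ⟨100, by norm_num, ?_⟩
  intro M N hM hN A b Δ hΔdef hΔ
  have hA : ∀ i j, |A i j| ≤ (Δ : ℤ) := by
    intro i j
    have : (A i j).natAbs ≤ Δ := by
      rw [hΔdef]
      exact Finset.le_sup (f := fun q : Fin M × Fin N => (A q.1 q.2).natAbs)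
        (Finset.mem_univ (i, j))
    rw [Int.abs_eq_natAbs]
    exact_mod_cast this
  have hn : 1 ≤ M * Δ := Nat.mul_pos hM hΔ
  obtain ⟨q, hq⟩ : ∃ q, q = Nat.log 2 (M * Δ) + 1 := ⟨_, rfl⟩
  have hq1 : M * Δ ≤ 2 ^ q := by
    rw [hq]; exact (Nat.lt_pow_succ_log_self (by norm_num) _).le
  obtain ⟨k, hk⟩ : ∃ k, k = q * (2 * M + 2) := ⟨_, rfl⟩
  obtain ⟨L, hL⟩ : ∃ L, L = k + k + (1 + (q + 2) * M) := ⟨_, rfl⟩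
  have hk1 : (M * Δ) ^ (2 * M + 2) ≤ 2 ^ k := by
    rw [hk, pow_mul]; exact Nat.pow_le_pow_left hq1 _
  have hL1 : (M * Δ) ^ (2 * M + 2) * 2 ^ k * (2 * (2 * Δ + 1) ^ M) ≤ 2 ^ L := by
    have h2 : 2 * Δ + 1 ≤ 2 ^ (q + 2) := by
      have : Δ ≤ M * Δ := Nat.le_mul_of_pos_left _ hM
      rw [pow_add]; omega
    have h3 : 2 ^ L = 2 ^ k * 2 ^ k * (2 * (2 ^ (q + 2)) ^ M) := by
      rw [hL, ← pow_mul]; ring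
    rw [h3]
    exact Nat.mul_le_mul (Nat.mul_le_mul_right _ hk1)
      (Nat.mul_le_mul_left _ (Nat.pow_le_pow_left h2 _))
  set E := Set.extremePoints ℝ (convexHull ℝ
            {x : Fin N → ℝ | (∀ j, 0 ≤ x j) ∧
              (∀ k, (∑ j, (A k j : ℝ) * x j) = (b k : ℝ)) ∧
              ∀ j, ∃ z : ℤ, x j = (z : ℝ)}) with hE
  let φ : (Fin N → ℝ) → (Fin N → Fin (L + 2)) := fun x j =>
    ⟨min (Nat.size (⌊x j⌋).toNat) (L + 1), by omega⟩
  have hinj : Set.InjOn φ E := by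
    intro x hx y hy hxy
    obtain ⟨z, hz, hzb, hzV⟩ := ihv_extreme A b x hx
    obtain ⟨w, hw, hwb, hwV⟩ := ihv_extreme A b y hy
    have : z = w := by
      refine ihv_main Δ k L hM hΔ A hA z w hzV hwV (hzb.trans hwb.symm)
        (by exact_mod_cast hk1) (by exact_mod_cast hL1) (by omega) ?_
      intro j
      have h1 := congrArg Fin.val (congrFun hxy j)
      simp only [φ, hz, hw, Int.floor_intCast] at h1
      by_cases h2 : Nat.size (z j).toNat = Nat.size (w j).toNat
      · exact Or.inl h2
      · right
        have h3 : L < Nat.size (z j).toNat := by omega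
        have h4 : L < Nat.size (w j).toNat := by omega
        rw [Nat.lt_size] at h3 h4
        zify at h3 h4
        rw [Int.toNat_of_nonneg (hzV.1 j)] at h3
        rw [Int.toNat_of_nonneg (hwV.1 j)] at h4
        exact ⟨h3, h4⟩
    ext j
    rw [hz, hw, this]
  refine ⟨Set.Finite.of_injOn (Set.mapsTo_univ φ E) hinj Set.finite_univ, ?_⟩
  have hcard : E.ncard ≤ (L + 2) ^ N := by
    have := Set.ncard_le_ncard_of_injOn φ (fun a _ => Set.mem_univ (φ a)) hinj Set.finite_univ
    simpa [Set.ncard_univ] using this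
  have hMr : (1 : ℝ) ≤ M := by exact_mod_cast hM
  have hNr : (1 : ℝ) ≤ N := by exact_mod_cast hN
  have hlog : (q : ℝ) ≤ 2 * Real.log ((M : ℝ) * Δ) + 1 := by
    have h1 : 2 ^ (Nat.log 2 (M * Δ)) ≤ M * Δ := Nat.pow_log_le_self 2 (by omega)
    have h2 : (2 : ℝ) ^ (Nat.log 2 (M * Δ)) ≤ (M : ℝ) * Δ := by exact_mod_cast h1
    have h3 := Real.log_le_log (by positivity) h2
    rw [Real.log_pow] at h3
    have h4 := Real.log_two_gt_d9
    have h5 : (0 : ℝ) ≤ (Nat.log 2 (M * Δ) : ℕ) := by positivity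
    rw [hq]; push_cast
    nlinarith
  have hlog0 : 0 ≤ Real.log ((M : ℝ) * Δ) := by
    apply Real.log_nonneg; exact_mod_cast hn
  have hLr : ((L + 2 : ℕ) : ℝ) ≤ 100 * (M : ℝ) * (Real.log ((M : ℝ) * (Δ : ℝ)) + 1) := by
    have h1 : ((L + 2 : ℕ) : ℝ) = q * (5 * M + 4) + 2 * M + 3 := by
      rw [hL, hk]; push_cast; ring
    rw [h1]
    set l := Real.log ((M : ℝ) * Δ)
    have : (q : ℝ) * (5 * M + 4) ≤ (2 * l + 1) * (9 * M) := by
      apply mul_le_mul hlog (by linarith) (by positivity) (by linarith)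
    nlinarith
  calc (E.ncard : ℝ) ≤ ((L + 2 : ℕ) : ℝ) ^ N := by exact_mod_cast hcard
    _ ≤ (100 * (M : ℝ) * (Real.log ((M : ℝ) * (Δ : ℝ)) + 1)) ^ N := by gcongr
    _ ≤ _ := le_mul_of_one_le_left (by positivity) (one_le_pow₀ hNr)
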